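/- arXiv:2507.05821 — 2 statements merged into one kernel-verified Lean document; each statement's English description precedes it below -/
import Mathlib

section
/- Let Γ be a connected cubic simple graph (finite or infinite) of girth 5 that contains a consistent cycle of length 5 and in which every edge is contained in a cycle of length 5. Then Γ is isomorphic to the Petersen graph or to the dodecahedron graph. -/
open SimpleGraph

/-- `G` contains a consistent cycle of length `n`: a cycle `c 0, c 1, …, c (n-1), c 0`
together with an automorphism rotating it by one step. -/
def HasConsistentCycle {V : Type*} (G : SimpleGraph V) (n : ℕ) : Prop :=
  ∃ c : ZMod n → V, Function.Injective c ∧ (∀ i, G.Adj (c i) (c (i + 1))) ∧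
    ∃ γ : G ≃g G, ∀ i, γ (c i) = c (i + 1)
/-- The Petersen graph: vertices are the 2-element subsets of a 5-element set,
two of them adjacent iff they are disjoint. -/
def petersenGraph : SimpleGraph {s : Finset (Fin 5) // s.card = 2} :=
  SimpleGraph.fromRel (fun a b => Disjoint a.1 b.1)
/-- The generalized Petersen graph GP(n,k): outer vertices `(false, i)` with edges
`a_i a_{i+1}`, spokes `a_i b_i`, and inner vertices `(true, i)` with edges `b_i b_{i+k}`. -/
def genPetersenGraph (n k : ℕ) : SimpleGraph (Bool × ZMod n) :=
  SimpleGraph.fromRel (fun p q =>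
    (p.1 = false ∧ q.1 = false ∧ q.2 = p.2 + 1) ∨
    (p.1 = false ∧ q.1 = true ∧ q.2 = p.2) ∨
    (p.1 = true ∧ q.1 = true ∧ q.2 = p.2 + (k : ZMod n)))
/-- The dodecahedron graph, i.e. the generalized Petersen graph GP(10,2). -/
def dodecahedronGraph : SimpleGraph (Bool × ZMod 10) := genPetersenGraph 10 2

/-!
Let `γ` rotate the pentagon `c`. The third neighbors `d i` of its vertices are rotated along with
it. Either they form a pentagram, and `c` and `d` span `GP(5, 2)`, or no two of them are adjacent.
In the latter case a pentagon through a spoke provides, by rotation, common neighbors `e i` of `d i`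
and `d (i + 1)`, so `d` and `e` alternate along a cycle of length ten. A pentagon through the edge
from some `e i` to its third neighbor `f i` then shows that `f` is a pentagon, too: `d` and `e` are
the outer, `c` and `f` the inner vertices of a copy of `GP(10, 2)`. In both cases the copy is
already cubic, hence it is everything by connectedness.
-/

open Function

section Neighbors

variable {V W : Type*} {G : SimpleGraph V} {H : SimpleGraph W} {u v a b c d : V}

theorem adj_iff_of_ncard_neighborSet_eq_three (hv : (G.neighborSet v).ncard = 3)
    (ha : G.Adj v a) (hb : G.Adj v b) (hc : G.Adj v c) (hab : a ≠ b) (hac : a ≠ c) (hbc : b ≠ c)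
    {x : V} : G.Adj v x ↔ x = a ∨ x = b ∨ x = c := by
  have hfin : (G.neighborSet v).Finite := Set.finite_of_ncard_ne_zero (by lia)
  have hsub : ({a, b, c} : Set V) ⊆ G.neighborSet v := by
    rintro y (rfl | rfl | rfl) <;> assumption
  have hcard : ({a, b, c} : Set V).ncard = 3 :=
    Set.ncard_eq_three.2 ⟨a, b, c, hab, hac, hbc, rfl⟩
  rw [← mem_neighborSet, ← Set.eq_of_subset_of_ncard_le hsub (by lia) hfin]
  rfl

theorem existsUnique_third_neighbor (hv : (G.neighborSet v).ncard = 3)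
    (ha : G.Adj v a) (hb : G.Adj v b) (hab : a ≠ b) : ∃! x, G.Adj v x ∧ x ≠ a ∧ x ≠ b := by
  have hsub : ({a, b} : Set V) ⊆ G.neighborSet v := by rintro y (rfl | rfl) <;> assumption
  have hcard : (G.neighborSet v \ {a, b}).ncard = 1 := by
    rw [Set.ncard_sdiff hsub, hv, Set.ncard_pair hab]
  obtain ⟨x, hx⟩ := Set.ncard_eq_one.1 hcard
  have hmem : ∀ y, (G.Adj v y ∧ y ≠ a ∧ y ≠ b) ↔ y = x := fun y ↦ by
    simpa using Set.ext_iff.1 hx y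
  exact ⟨x, (hmem x).2 rfl, fun y hy ↦ (hmem y).1 hy⟩

theorem not_adj_of_adj_of_adj (hG : 3 < G.egirth) (hab : G.Adj a b) (hbc : G.Adj b c) :
    ¬ G.Adj a c := by
  intro hac
  let triangle : G.Walk a a := .cons hab (.cons hbc (.cons hac.symm .nil))
  have hcircuit : triangle.IsCircuit := by
    have := hab.ne
    have := hbc.ne
    have := hac.ne
    simp only [triangle, Walk.isCircuit_def, Walk.isTrail_def, Walk.edges_cons, Walk.edges_nil,
      List.nodup_cons, List.mem_cons, Sym2.eq_iff, List.not_mem_nil, List.nodup_nil, ne_eq,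
      Walk.eq_nil_iff_nil, Walk.not_nil_cons]
    grind
  exact hG.not_ge hcircuit.egirth_le_length

theorem eq_of_common_neighbors (hG : 4 < G.egirth) (huv : u ≠ v) (hau : G.Adj a u)
    (hav : G.Adj a v) (hbu : G.Adj b u) (hbv : G.Adj b v) : a = b := by
  by_contra hab
  let square : G.Walk u u := .cons hau.symm (.cons hav (.cons hbv.symm (.cons hbu .nil)))
  have hcircuit : square.IsCircuit := by
    have := hau.ne
    have := hav.ne
    have := hbu.ne
    have := hbv.ne
    simp only [square, Walk.isCircuit_def, Walk.isTrail_def, Walk.edges_cons, Walk.edges_nil,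
      List.nodup_cons, List.mem_cons, Sym2.eq_iff, List.not_mem_nil, List.nodup_nil, ne_eq,
      Walk.eq_nil_iff_nil, Walk.not_nil_cons]
    grind
  exact hG.not_ge hcircuit.egirth_le_length

theorem nonempty_iso_of_copy [Nonempty W] (hG : G.Preconnected) (f : H.Copy G)
    (hfin : ∀ w, (G.neighborSet (f w)).Finite)
    (hcard : ∀ w, (G.neighborSet (f w)).ncard ≤ (H.neighborSet w).ncard) :
    Nonempty (H ≃g G) := by
  have himage (w : W) : f '' H.neighborSet w = G.neighborSet (f w) := by
    refine Set.eq_of_subset_of_ncard_le ?_ ?_ (hfin w)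
    · rintro _ ⟨x, hx, rfl⟩
      exact f.toHom.map_adj hx
    · exact (hcard w).trans_eq (Set.ncard_image_of_injective _ f.injective).symm
  have hsurj : Surjective f := by
    intro v
    obtain ⟨w₀⟩ := ‹Nonempty W›
    induction (reachable_iff_reflTransGen _ _).1 (hG (f w₀) v) with
    | refl => exact ⟨w₀, rfl⟩
    | tail _ hadj ih =>
      obtain ⟨w, rfl⟩ := ih
      obtain ⟨x, -, hx⟩ := (himage w).ge hadj
      exact ⟨x, hx⟩
  refine ⟨⟨Equiv.ofBijective f ⟨f.injective, hsurj⟩, fun {w x} ↦ ⟨fun hadj ↦ ?_, f.toHom.map_adj⟩⟩⟩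
  obtain ⟨y, hy, hyx⟩ := (himage w).ge hadj
  exact f.injective hyx ▸ hy

end Neighbors

section Rotation

theorem forall_of_forall_add_one {n : ℕ} [NeZero n] {P : ZMod n → Prop}
    (hP : ∀ i, P i → P (i + 1)) {i : ZMod n} (hi : P i) (j : ZMod n) : P j := by
  have hnat (m : ℕ) : P (i + m) := by
    induction m with
    | zero => simpa using hi
    | succ m ih => simpa only [Nat.cast_succ, add_assoc] using hP _ ih
  simpa using hnat (j - i).val

/-- The family `x`, indexed cyclically, is moved one step along by `f`. -/
def IsRotatedBy {α : Type*} {n : ℕ} (x : ZMod n → α) (f : α → α) : Prop :=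
  ∀ i, f (x i) = x (i + 1)

theorem exists_isRotatedBy_of_existsUnique {α : Type*} {n : ℕ} {f : α → α}
    {R : ZMod n → α → Prop} (hR : ∀ i, ∃! a, R i a) (hf : ∀ i a, R i a → R (i + 1) (f a)) :
    ∃ x : ZMod n → α, IsRotatedBy x f ∧ ∀ i, R i (x i) := by
  choose x hx hunique using hR
  exact ⟨x, fun i ↦ hunique (i + 1) _ (hf i _ (hx i)), hx⟩

namespace IsRotatedBy

variable {α : Type*} {n : ℕ} {f : α → α} {x y : ZMod n → α}

theorem comp_add_right (hx : IsRotatedBy x f) (k : ZMod n) :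
    IsRotatedBy (fun i ↦ x (i + k)) f := fun i ↦ by
  rw [hx, add_right_comm]

theorem apply_add_eq [NeZero n] (hx : IsRotatedBy x f) (hy : IsRotatedBy y f) {i j : ZMod n}
    (hij : x i = y j) (k : ZMod n) : x (i + k) = y (j + k) := by
  refine forall_of_forall_add_one (P := fun k ↦ x (i + k) = y (j + k)) (fun k hk ↦ ?_)
    (i := 0) (by simpa using hij) k
  rw [← add_assoc, ← hx, hk, hy, add_assoc]

theorem injective_or_forall_eq {p : ℕ} [Fact p.Prime] {x : ZMod p → α} (hx : IsRotatedBy x f) :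
    Injective x ∨ ∀ i j, x i = x j := by
  refine or_iff_not_imp_left.2 fun hinj ↦ ?_
  obtain ⟨i, j, hij, hne⟩ := not_injective_iff.1 hinj
  have ht : j - i ≠ 0 := sub_ne_zero.2 hne.symm
  have hperiod (m : ZMod p) : x m = x (m + (j - i)) := by
    simpa [add_sub_left_comm, add_sub_assoc, add_comm] using hx.apply_add_eq hx hij (m - i)
  have hmul (m : ZMod p) : x (m * (j - i)) = x 0 :=
    forall_of_forall_add_one (P := fun m ↦ x (m * (j - i)) = x 0)
      (fun m hm ↦ by rw [add_one_mul, ← hperiod, hm]) (i := 0) (by rw [zero_mul]) m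
  have hzero (k : ZMod p) : x k = x 0 := by
    simpa [ht] using hmul (k / (j - i))
  exact fun k l ↦ (hzero k).trans (hzero l).symm

theorem injective_of_adj {V : Type*} {G : SimpleGraph V} {f : V → V} {p : ℕ} [Fact p.Prime]
    {x y : ZMod p → V} (hy : IsRotatedBy y f) (hx : Injective x)
    (hadj : ∀ i, G.Adj (y i) (x i)) (hfin : (G.neighborSet (y 0)).Finite)
    (hcard : (G.neighborSet (y 0)).ncard < p) : Injective y := by
  refine hy.injective_or_forall_eq.resolve_right fun hconst ↦ hcard.not_ge ?_
  have hsub : Set.range x ⊆ G.neighborSet (y 0) := by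
    rintro _ ⟨i, rfl⟩
    exact hconst i 0 ▸ hadj i
  calc p = (Set.range x).ncard := by rw [Set.ncard_range_of_injective hx, Nat.card_zmod]
    _ ≤ (G.neighborSet (y 0)).ncard := Set.ncard_le_ncard hsub hfin

theorem exists_third_neighbor {V : Type*} {G : SimpleGraph V} {γ : G ≃g G} {n : ℕ}
    {x a b : ZMod n → V} (hx : IsRotatedBy x γ) (ha : IsRotatedBy a γ) (hb : IsRotatedBy b γ)
    (hdeg : ∀ i, (G.neighborSet (x i)).ncard = 3) (hxa : ∀ i, G.Adj (x i) (a i))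
    (hxb : ∀ i, G.Adj (x i) (b i)) (hab : ∀ i, a i ≠ b i) :
    ∃ y : ZMod n → V, IsRotatedBy y γ ∧ ∀ i, G.Adj (x i) (y i) ∧ y i ≠ a i ∧ y i ≠ b i := by
  refine exists_isRotatedBy_of_existsUnique
    (fun i ↦ existsUnique_third_neighbor (hdeg i) (hxa i) (hxb i) (hab i)) fun i z hz ↦ ?_
  rw [← hx, ← ha, ← hb]
  exact ⟨γ.map_adj_iff.2 hz.1, γ.injective.ne hz.2.1, γ.injective.ne hz.2.2⟩

end IsRotatedBy

end Rotation

section GeneralizedPetersen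

variable {V : Type*} {G : SimpleGraph V} {n k : ℕ} {a b : ZMod n → V}

theorem neighborSet_genPetersenGraph_false (h2 : (2 : ZMod n) ≠ 0) (i : ZMod n) :
    (genPetersenGraph n k).neighborSet (false, i) =
      {(false, i + 1), (false, i - 1), (true, i)} := by
  have h1 : (1 : ZMod n) ≠ 0 := fun h ↦ h2 (by rw [← one_add_one_eq_two, h, add_zero])
  ext ⟨_ | _, j⟩ <;>
    simp only [genPetersenGraph, mem_neighborSet, fromRel_adj, Set.mem_insert_iff,
      Set.mem_singleton_iff] <;>
    grind

theorem neighborSet_genPetersenGraph_true (hk : (2 * k : ZMod n) ≠ 0) (i : ZMod n) :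
    (genPetersenGraph n k).neighborSet (true, i) =
      {(true, i + k), (true, i - k), (false, i)} := by
  have : (k : ZMod n) ≠ 0 := right_ne_zero_of_mul hk
  ext ⟨_ | _, j⟩ <;>
    simp only [genPetersenGraph, mem_neighborSet, fromRel_adj, Set.mem_insert_iff,
      Set.mem_singleton_iff] <;>
    grind

theorem ncard_neighborSet_genPetersenGraph (h2 : (2 : ZMod n) ≠ 0) (hk : (2 * k : ZMod n) ≠ 0)
    (w : Bool × ZMod n) : ((genPetersenGraph n k).neighborSet w).ncard = 3 := by
  obtain ⟨_ | _, i⟩ := w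
  · have hne : i + 1 ≠ i - 1 := fun h ↦ h2 (by linear_combination h)
    rw [neighborSet_genPetersenGraph_false h2, Set.ncard_eq_three]
    exact ⟨_, _, _, by simpa using hne, by simp, by simp, rfl⟩
  · have hne : i + k ≠ i - k := fun h ↦ hk (by linear_combination h)
    rw [neighborSet_genPetersenGraph_true hk, Set.ncard_eq_three]
    exact ⟨_, _, _, by simpa using hne, by simp, by simp, rfl⟩

/-- The homomorphism out of a generalized Petersen graph sending the outer vertices to `a` and the
inner ones to `b`. -/
def genPetersenHom (ha : ∀ i, G.Adj (a i) (a (i + 1))) (hab : ∀ i, G.Adj (a i) (b i))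
    (hb : ∀ i, G.Adj (b i) (b (i + k))) : genPetersenGraph n k →g G where
  toFun p := bif p.1 then b p.2 else a p.2
  map_rel' := by
    rintro ⟨l, i⟩ ⟨m, j⟩ ⟨-, (⟨rfl, rfl, rfl⟩ | ⟨rfl, rfl, rfl⟩ | ⟨rfl, rfl, rfl⟩) |
      (⟨rfl, rfl, rfl⟩ | ⟨rfl, rfl, rfl⟩ | ⟨rfl, rfl, rfl⟩)⟩
    exacts [ha _, hab _, hb _, (ha _).symm, (hab _).symm, (hb _).symm]

theorem genPetersenHom_injective (ha : ∀ i, G.Adj (a i) (a (i + 1)))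
    (hab : ∀ i, G.Adj (a i) (b i)) (hb : ∀ i, G.Adj (b i) (b (i + k)))
    (ha_inj : Injective a) (hb_inj : Injective b) (hne : ∀ i j, a i ≠ b j) :
    Injective (genPetersenHom ha hab hb) := by
  rintro ⟨_ | _, i⟩ ⟨_ | _, j⟩ hij
  · exact congrArg _ (ha_inj hij)
  · exact absurd hij (hne i j)
  · exact absurd hij.symm (hne j i)
  · exact congrArg _ (hb_inj hij)

theorem nonempty_iso_genPetersenGraph (hG : G.Preconnected)
    (hdeg : ∀ v, (G.neighborSet v).ncard = 3) (h2 : (2 : ZMod n) ≠ 0)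
    (hk : (2 * k : ZMod n) ≠ 0) (ha : ∀ i, G.Adj (a i) (a (i + 1)))
    (hab : ∀ i, G.Adj (a i) (b i)) (hb : ∀ i, G.Adj (b i) (b (i + k)))
    (ha_inj : Injective a) (hb_inj : Injective b) (hne : ∀ i j, a i ≠ b j) :
    Nonempty (G ≃g genPetersenGraph n k) := by
  obtain ⟨e⟩ := nonempty_iso_of_copy hG
    ((genPetersenHom ha hab hb).toCopy (genPetersenHom_injective ha hab hb ha_inj hb_inj hne))
    (fun _ ↦ Set.finite_of_ncard_ne_zero (by simp [hdeg]))
    (fun w ↦ (hdeg _).trans_le (ncard_neighborSet_genPetersenGraph h2 hk w).ge)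
  exact ⟨e.symm⟩

/-- The vertex of the Petersen graph corresponding to a vertex of `GP(5, 2)`: outer vertices go to
pairs of consecutive elements of the 5-element set, inner ones to pairs at distance two. -/
def petersenVertex (p : Bool × ZMod 5) : {s : Finset (Fin 5) // s.card = 2} :=
  bif p.1 then ⟨{(2 * p.2 + 2 : ZMod 5), (2 * p.2 + 4 : ZMod 5)}, by
    generalize p.2 = i; revert i; decide⟩
  else ⟨{(2 * p.2 : ZMod 5), (2 * p.2 + 1 : ZMod 5)}, by
    generalize p.2 = i; revert i; decide⟩

instance (n k : ℕ) : DecidableRel (genPetersenGraph n k).Adj :=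
  inferInstanceAs (DecidableRel (fromRel _).Adj)

instance : DecidableRel petersenGraph.Adj :=
  inferInstanceAs (DecidableRel (fromRel _).Adj)

theorem petersenVertex_bijective : Bijective petersenVertex := by
  decide +kernel

theorem petersenGraph_adj_petersenVertex : ∀ p q : Bool × ZMod 5,
    petersenGraph.Adj (petersenVertex p) (petersenVertex q) ↔ (genPetersenGraph 5 2).Adj p q := by
  decide +kernel

/-- The Petersen graph is the generalized Petersen graph `GP(5, 2)`. -/
noncomputable def genPetersenGraphIsoPetersenGraph : genPetersenGraph 5 2 ≃g petersenGraph where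
  toEquiv := .ofBijective petersenVertex petersenVertex_bijective
  map_rel_iff' := petersenGraph_adj_petersenVertex _ _

end GeneralizedPetersen

section Interleave

variable {α : Type*} {n : ℕ} {x y : ZMod n → α}

/-- The cyclic sequence `x 0, y 0, x 1, y 1, …` of twice the length, for `n ≠ 0`. -/
def interleave (x y : ZMod n → α) (j : ZMod (2 * n)) : α :=
  if Even j.val then x (j.val / 2 : ℕ) else y (j.val / 2 : ℕ)

theorem interleave_two_mul (x y : ZMod n → α) (m : ℕ) : interleave x y (2 * m : ℕ) = x m := by
  rw [interleave, ZMod.val_natCast, Nat.mul_mod_mul_left, if_pos (even_two_mul _),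
    Nat.mul_div_cancel_left _ two_pos, ZMod.natCast_mod]

theorem interleave_two_mul_add_one (x y : ZMod n → α) (m : ℕ) :
    interleave x y (2 * m + 1 : ℕ) = y m := by
  have hhalf (l : ℕ) : (2 * l + 1) / 2 = l := by lia
  have hval : (2 * m + 1) % (2 * n) = 2 * (m % n) + 1 := by
    rw [Nat.mod_mul, hhalf]
    lia
  rw [interleave, ZMod.val_natCast, hval, if_neg (by simp), hhalf, ZMod.natCast_mod]

theorem exists_eq_natCast_two_mul_or [NeZero n] (j : ZMod (2 * n)) :
    ∃ m : ℕ, j = (2 * m : ℕ) ∨ j = (2 * m + 1 : ℕ) := by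
  obtain ⟨k, rfl⟩ := ZMod.natCast_zmod_surjective j
  obtain ⟨m, rfl | rfl⟩ := k.even_or_odd'
  exacts [⟨m, .inl rfl⟩, ⟨m, .inr rfl⟩]

theorem interleave_rel_add_one [NeZero n] {R : α → α → Prop} (hxy : ∀ i, R (x i) (y i))
    (hyx : ∀ i, R (y i) (x (i + 1))) (j : ZMod (2 * n)) :
    R (interleave x y j) (interleave x y (j + 1)) := by
  obtain ⟨m, rfl | rfl⟩ := exists_eq_natCast_two_mul_or j
  · rw [← Nat.cast_add_one, interleave_two_mul, interleave_two_mul_add_one]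
    exact hxy m
  · rw [← Nat.cast_add_one, add_assoc, one_add_one_eq_two, ← mul_add_one,
      interleave_two_mul_add_one, interleave_two_mul, Nat.cast_add_one]
    exact hyx m

theorem interleave_rel_add_two [NeZero n] {R : α → α → Prop} (hx : ∀ i, R (x i) (x (i + 1)))
    (hy : ∀ i, R (y i) (y (i + 1))) (j : ZMod (2 * n)) :
    R (interleave x y j) (interleave x y (j + 2)) := by
  obtain ⟨m, rfl | rfl⟩ := exists_eq_natCast_two_mul_or j
  · have hshift : ((2 * m : ℕ) : ZMod (2 * n)) + 2 = (2 * (m + 1) : ℕ) := by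
      push_cast
      ring
    rw [hshift, interleave_two_mul, interleave_two_mul, Nat.cast_add_one]
    exact hx m
  · have hshift : ((2 * m + 1 : ℕ) : ZMod (2 * n)) + 2 = (2 * (m + 1) + 1 : ℕ) := by
      push_cast
      ring
    rw [hshift, interleave_two_mul_add_one, interleave_two_mul_add_one, Nat.cast_add_one]
    exact hy m

theorem interleave_rel_interleave [NeZero n] {β : Type*} {x' y' : ZMod n → β} {R : α → β → Prop}
    (hx : ∀ i, R (x i) (x' i)) (hy : ∀ i, R (y i) (y' i)) (j : ZMod (2 * n)) :
    R (interleave x y j) (interleave x' y' j) := by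
  obtain ⟨m, rfl | rfl⟩ := exists_eq_natCast_two_mul_or j
  · simpa only [interleave_two_mul] using hx m
  · simpa only [interleave_two_mul_add_one] using hy m

theorem forall_interleave [NeZero n] {P : α → Prop} (hx : ∀ i, P (x i)) (hy : ∀ i, P (y i))
    (j : ZMod (2 * n)) : P (interleave x y j) := by
  obtain ⟨m, rfl | rfl⟩ := exists_eq_natCast_two_mul_or j
  · simpa only [interleave_two_mul] using hx m
  · simpa only [interleave_two_mul_add_one] using hy m

theorem interleave_injective [NeZero n] (hx : Injective x) (hy : Injective y)
    (hne : ∀ i j, x i ≠ y j) : Injective (interleave x y) := by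
  have hcast {l m : ℕ} (h : (l : ZMod n) = m) : ((2 * l : ℕ) : ZMod (2 * n)) = (2 * m : ℕ) :=
    (ZMod.natCast_eq_natCast_iff _ _ _).2 (((ZMod.natCast_eq_natCast_iff _ _ _).1 h).mul_left' 2)
  intro i j hij
  obtain ⟨l, rfl | rfl⟩ := exists_eq_natCast_two_mul_or i <;>
    obtain ⟨m, rfl | rfl⟩ := exists_eq_natCast_two_mul_or j <;>
    simp only [interleave_two_mul, interleave_two_mul_add_one] at hij
  · exact hcast (hx hij)
  · exact absurd hij (hne _ _)
  · exact absurd hij.symm (hne _ _)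
  · rw [Nat.cast_add_one, Nat.cast_add_one, hcast (hy hij)]

end Interleave

section Layers

variable {V : Type*} {G : SimpleGraph V} {γ : G ≃g G} {c d e f k : ZMod 5 → V} {i j : ZMod 5}
  {x y : V}

-- Kept local: globally it would change the instances found for the arithmetic of `ZMod 5`.
local instance fact_prime_five : Fact (Nat.Prime 5) := ⟨Nat.prime_five⟩

/-- The family `c` lists the vertices of a cycle of length five in cyclic order. -/
def IsPentagon (G : SimpleGraph V) (c : ZMod 5 → V) : Prop :=
  Injective c ∧ ∀ i, G.Adj (c i) (c (i + 1))

theorem IsPentagon.adj_sub_one (hc : IsPentagon G c) (i : ZMod 5) : G.Adj (c i) (c (i - 1)) := by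
  simpa using (hc.2 (i - 1)).symm

theorem IsPentagon.eq_add_one_or_eq_sub_one_of_adj (hc : IsPentagon G c) (hG : 3 < G.egirth)
    (hij : G.Adj (c i) (c j)) : j = i + 1 ∨ j = i - 1 := by
  have hcases : ∀ i j : ZMod 5, i = j ∨ j = i + 1 + 1 ∨ i = j + 1 + 1 ∨ j = i + 1 ∨ j = i - 1 := by
    decide
  rcases hcases i j with rfl | rfl | rfl | hj
  · exact absurd rfl hij.ne
  · exact absurd hij (not_adj_of_adj_of_adj hG (hc.2 _) (hc.2 _))
  · exact absurd hij.symm (not_adj_of_adj_of_adj hG (hc.2 _) (hc.2 _))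
  · exact hj

/-- A pentagon `c` rotated by `γ`, together with the family `d` of the third neighbors of its
vertices. -/
structure SpokedPentagon (G : SimpleGraph V) (γ : G ≃g G) (c d : ZMod 5 → V) : Prop where
  isPentagon : IsPentagon G c
  rotated_c : IsRotatedBy c γ
  rotated_d : IsRotatedBy d γ
  adj_c_d : ∀ i, G.Adj (c i) (d i)
  injective_d : Injective d
  c_ne_d : ∀ i j, c i ≠ d j

theorem IsPentagon.exists_spokedPentagon (hc : IsPentagon G c) (hG : 3 < G.egirth)
    (hdeg : ∀ v, (G.neighborSet v).ncard = 3) (hγ : IsRotatedBy c γ) :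
    ∃ d, SpokedPentagon G γ c d := by
  obtain ⟨d, hγd, hd⟩ := hγ.exists_third_neighbor (b := fun i ↦ c (i - 1))
    (hγ.comp_add_right 1) (by simpa only [sub_eq_add_neg] using hγ.comp_add_right (-1))
    (fun i ↦ hdeg (c i)) hc.2 hc.adj_sub_one
    (fun i ↦ hc.1.ne (by revert i; decide))
  refine ⟨d, hc, hγ, hγd, fun i ↦ (hd i).1, ?_, fun i j hij ↦ ?_⟩
  · exact hγd.injective_of_adj hc.1 (fun i ↦ (hd i).1.symm)
      (Set.finite_of_ncard_ne_zero (by simp [hdeg])) (by simp [hdeg])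
  · obtain ⟨hadj, hne, hne'⟩ := hd j
    rcases hc.eq_add_one_or_eq_sub_one_of_adj hG (hij ▸ hadj) with rfl | rfl
    exacts [hne hij.symm, hne' hij.symm]

namespace SpokedPentagon

theorem adj_c_iff (h : SpokedPentagon G γ c d) (hdeg : ∀ v, (G.neighborSet v).ncard = 3) :
    G.Adj (c i) x ↔ x = c (i + 1) ∨ x = c (i - 1) ∨ x = d i :=
  adj_iff_of_ncard_neighborSet_eq_three (hdeg _) (h.isPentagon.2 i) (h.isPentagon.adj_sub_one i)
    (h.adj_c_d i) (h.isPentagon.1.ne (by revert i; decide)) (h.c_ne_d _ _) (h.c_ne_d _ _)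

theorem eq_of_adj_c_d (h : SpokedPentagon G γ c d) (hdeg : ∀ v, (G.neighborSet v).ncard = 3)
    (hij : G.Adj (c i) (d j)) : i = j := by
  rcases (h.adj_c_iff hdeg).1 hij with hd | hd | hd
  · exact absurd hd.symm (h.c_ne_d _ _)
  · exact absurd hd.symm (h.c_ne_d _ _)
  · exact (h.injective_d hd).symm

theorem not_adj_d_add_one (h : SpokedPentagon G γ c d) (hG : 4 < G.egirth) (i : ZMod 5) :
    ¬ G.Adj (d i) (d (i + 1)) := fun hd ↦
  h.c_ne_d (i + 1) i <| eq_of_common_neighbors hG (h.c_ne_d i (i + 1)) (h.isPentagon.2 i).symm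
    (h.adj_c_d (i + 1)) (h.adj_c_d i).symm hd

theorem adj_d_add_two (h : SpokedPentagon G γ c d) (hd : G.Adj (d i) (d (i + 2))) (j : ZMod 5) :
    G.Adj (d j) (d (j + 2)) := by
  refine forall_of_forall_add_one (P := fun j ↦ G.Adj (d j) (d (j + 2))) (fun j hj ↦ ?_) hd j
  rw [add_right_comm, ← h.rotated_d, ← h.rotated_d]
  exact γ.map_adj_iff.2 hj

theorem not_adj_d (h : SpokedPentagon G γ c d) (hG : 4 < G.egirth)
    (hd : ∀ i, ¬ G.Adj (d i) (d (i + 2))) (i j : ZMod 5) : ¬ G.Adj (d i) (d j) := by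
  intro hij
  have hcases : ∀ i j : ZMod 5, i = j ∨ j = i + 1 ∨ j = i + 2 ∨ i = j + 1 ∨ i = j + 2 := by
    decide
  rcases hcases i j with rfl | rfl | rfl | rfl | rfl
  exacts [hij.ne rfl, h.not_adj_d_add_one hG _ hij, hd _ hij,
    h.not_adj_d_add_one hG _ hij.symm, hd _ hij.symm]

theorem nonempty_iso_petersenGraph (h : SpokedPentagon G γ c d) (hconn : G.Preconnected)
    (hdeg : ∀ v, (G.neighborSet v).ncard = 3) (hd : G.Adj (d i) (d (i + 2))) :
    Nonempty (G ≃g petersenGraph) := by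
  obtain ⟨φ⟩ := nonempty_iso_genPetersenGraph (k := 2) hconn hdeg (by decide) (by decide)
    h.isPentagon.2 h.adj_c_d (h.adj_d_add_two hd) h.isPentagon.1 h.injective_d h.c_ne_d
  exact ⟨φ.trans genPetersenGraphIsoPetersenGraph⟩

theorem not_adj_c_of_adj_d (h : SpokedPentagon G γ c d) (hdeg : ∀ v, (G.neighborSet v).ncard = 3)
    (hd : ∀ i j, ¬ G.Adj (d i) (d j)) (hx : G.Adj (d i) x) (hxc : x ≠ c i) (j : ZMod 5) :
    ¬ G.Adj (c j) x := by
  intro hjx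
  rcases (h.adj_c_iff hdeg).1 hjx with rfl | rfl | rfl
  · exact hxc (congrArg c (h.eq_of_adj_c_d hdeg hx.symm))
  · exact hxc (congrArg c (h.eq_of_adj_c_d hdeg hx.symm))
  · exact hd _ _ hx

theorem eq_d_of_adj_of_adj (h : SpokedPentagon G γ c d)
    (hdeg : ∀ v, (G.neighborSet v).ncard = 3) (hd : ∀ i j, ¬ G.Adj (d i) (d j))
    (hx : G.Adj (d i) x) (hxc : x ≠ c i) (hxy : G.Adj x y) (hy : G.Adj (c j) y) : y = d j := by
  have hx_c := h.not_adj_c_of_adj_d hdeg hd hx hxc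
  rcases (h.adj_c_iff hdeg).1 hy with rfl | rfl | rfl
  · exact absurd hxy.symm (hx_c _)
  · exact absurd hxy.symm (hx_c _)
  · rfl

-- A pentagon through the spoke `c i`-`d i` returns to `c i` along a neighboring spoke, so its
-- fifth vertex is a common neighbor of two consecutive `d`s.
theorem exists_common_neighbor (h : SpokedPentagon G γ c d)
    (hdeg : ∀ v, (G.neighborSet v).ncard = 3) (hd : ∀ i j, ¬ G.Adj (d i) (d j))
    (hk : IsPentagon G k) (hk0 : k 0 = c i) (hk1 : k 1 = d i) :
    ∃ j z, G.Adj (d j) z ∧ G.Adj (d (j + 1)) z := by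
  have hd2 : G.Adj (d i) (k 2) := hk1 ▸ hk.2 1
  have h43 : G.Adj (k 4) (k 3) := (hk.2 3).symm
  have h2c : k 2 ≠ c i := hk0 ▸ hk.1.ne (by decide)
  have hc4 : G.Adj (c i) (k 4) := hk0 ▸ (hk.2 4).symm
  have h41 : k 4 ≠ d i := hk1 ▸ hk.1.ne (by decide)
  rcases (h.adj_c_iff hdeg).1 hc4 with h4 | h4 | h4
  · have h3 : k 3 = d (i + 1) := h.eq_d_of_adj_of_adj hdeg hd hd2 h2c (hk.2 2) (h4 ▸ h43)
    exact ⟨i, k 2, hd2, h3 ▸ (hk.2 2).symm⟩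
  · have h3 : k 3 = d (i - 1) := h.eq_d_of_adj_of_adj hdeg hd hd2 h2c (hk.2 2) (h4 ▸ h43)
    exact ⟨i - 1, k 2, h3 ▸ (hk.2 2).symm, by rwa [sub_add_cancel]⟩
  · exact absurd h4 h41

end SpokedPentagon

/-- A spoked pentagon surrounded by the closed walk `d 0, e 0, d 1, e 1, …, d 4, e 4`. -/
structure BeltedPentagon (G : SimpleGraph V) (γ : G ≃g G) (c d e : ZMod 5 → V) : Prop
    extends SpokedPentagon G γ c d where
  rotated_e : IsRotatedBy e γ
  adj_d_e : ∀ i, G.Adj (d i) (e i)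
  adj_e_d : ∀ i, G.Adj (e i) (d (i + 1))
  injective_e : Injective e
  c_ne_e : ∀ i j, c i ≠ e j
  d_ne_e : ∀ i j, d i ≠ e j

theorem SpokedPentagon.exists_beltedPentagon (h : SpokedPentagon G γ c d) (hG : 4 < G.egirth)
    (hdeg : ∀ v, (G.neighborSet v).ncard = 3) (hd : ∀ i j, ¬ G.Adj (d i) (d j))
    (hx : G.Adj (d i) x) (hx' : G.Adj (d (i + 1)) x) : ∃ e, BeltedPentagon G γ c d e := by
  have hstep (i z) (hz : G.Adj (d i) z ∧ G.Adj (d (i + 1)) z) :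
      G.Adj (d (i + 1)) (γ z) ∧ G.Adj (d (i + 1 + 1)) (γ z) := by
    rw [← h.rotated_d i, ← h.rotated_d (i + 1)]
    exact hz.imp γ.map_adj_iff.2 γ.map_adj_iff.2
  have hunique (j) : ∃! z, G.Adj (d j) z ∧ G.Adj (d (j + 1)) z := by
    obtain ⟨z, hz, hz'⟩ := forall_of_forall_add_one
      (P := fun j ↦ ∃ z, G.Adj (d j) z ∧ G.Adj (d (j + 1)) z)
      (fun j ⟨z, hz⟩ ↦ ⟨γ z, hstep j z hz⟩) ⟨x, hx, hx'⟩ j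
    exact ⟨z, ⟨hz, hz'⟩, fun w hw ↦ eq_of_common_neighbors hG (h.injective_d.ne (by simp))
      hw.1.symm hw.2.symm hz.symm hz'.symm⟩
  obtain ⟨e, hγe, he⟩ := exists_isRotatedBy_of_existsUnique hunique hstep
  refine ⟨e, h, hγe, fun i ↦ (he i).1, fun i ↦ (he i).2.symm, ?_, fun i j hij ↦ ?_,
    fun i j hij ↦ ?_⟩
  · exact hγe.injective_of_adj h.injective_d (fun i ↦ (he i).1.symm)
      (Set.finite_of_ncard_ne_zero (by simp [hdeg])) (by simp [hdeg])
  · have hj : i = j := h.eq_of_adj_c_d hdeg (hij ▸ (he j).1.symm)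
    have hj' : i = j + 1 := h.eq_of_adj_c_d hdeg (hij ▸ (he j).2.symm)
    simp [hj] at hj'
  · exact hd j i (hij ▸ (he j).1)

namespace BeltedPentagon

theorem adj_d_iff (h : BeltedPentagon G γ c d e) (hdeg : ∀ v, (G.neighborSet v).ncard = 3) :
    G.Adj (d i) x ↔ x = c i ∨ x = e i ∨ x = e (i - 1) :=
  adj_iff_of_ncard_neighborSet_eq_three (hdeg _) (h.adj_c_d i).symm (h.adj_d_e i)
    (by simpa using (h.adj_e_d (i - 1)).symm) (h.c_ne_e _ _) (h.c_ne_e _ _)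
    (h.injective_e.ne (by revert i; decide))

theorem not_adj_c_e (h : BeltedPentagon G γ c d e) (hdeg : ∀ v, (G.neighborSet v).ncard = 3)
    (i j : ZMod 5) : ¬ G.Adj (c i) (e j) := by
  rw [h.adj_c_iff hdeg]
  rintro (hij | hij | hij)
  exacts [h.c_ne_e _ _ hij.symm, h.c_ne_e _ _ hij.symm, h.d_ne_e _ _ hij.symm]

end BeltedPentagon

/-- A belted pentagon together with the family `f` of the third neighbors of the vertices `e i`. -/
structure SpokedBelt (G : SimpleGraph V) (γ : G ≃g G) (c d e f : ZMod 5 → V) : Prop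
    extends BeltedPentagon G γ c d e where
  rotated_f : IsRotatedBy f γ
  adj_e_f : ∀ i, G.Adj (e i) (f i)
  injective_f : Injective f
  c_ne_f : ∀ i j, c i ≠ f j
  d_ne_f : ∀ i j, d i ≠ f j
  e_ne_f : ∀ i j, e i ≠ f j

theorem BeltedPentagon.exists_spokedBelt (h : BeltedPentagon G γ c d e)
    (hdeg : ∀ v, (G.neighborSet v).ncard = 3) : ∃ f, SpokedBelt G γ c d e f := by
  obtain ⟨f, hγf, hf⟩ := h.rotated_e.exists_third_neighbor h.rotated_d
    (h.rotated_d.comp_add_right 1) (fun i ↦ hdeg (e i)) (fun i ↦ (h.adj_d_e i).symm) h.adj_e_d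
    (fun i ↦ h.injective_d.ne (by simp))
  have e_adj_iff {i x} : G.Adj (e i) x ↔ x = d i ∨ x = d (i + 1) ∨ x = f i :=
    adj_iff_of_ncard_neighborSet_eq_three (hdeg _) (h.adj_d_e i).symm (h.adj_e_d i) (hf i).1
      (h.injective_d.ne (by simp)) (hf i).2.1.symm (hf i).2.2.symm
  refine ⟨f, h, hγf, fun i ↦ (hf i).1, ?_, fun i j hij ↦ ?_, fun i j hij ↦ ?_, fun i j hij ↦ ?_⟩
  · exact hγf.injective_of_adj h.injective_e (fun i ↦ (hf i).1.symm)
      (Set.finite_of_ncard_ne_zero (by simp [hdeg])) (by simp [hdeg])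
  · exact h.not_adj_c_e hdeg i j (hij ▸ (hf j).1.symm)
  · obtain ⟨hadj, hne, hne'⟩ := hf j
    rcases (h.adj_d_iff hdeg).1 (hij ▸ hadj.symm) with hj | hj | hj
    · exact h.c_ne_e _ _ hj.symm
    · exact hne (h.injective_e hj ▸ hij.symm)
    · have hi : i = j + 1 := by rw [h.injective_e hj, sub_add_cancel]
      exact hne' (hi ▸ hij.symm)
  · -- `f` is then `e` shifted by `i - j`, and `f i = e j` forces the shift to be zero.
    have hshift : e (2 * i - j) = f i := by
      convert h.rotated_e.apply_add_eq hγf hij (i - j) using 2 <;> ring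
    rcases e_adj_iff.1 (hij ▸ (hf j).1.symm) with hj | hj | hj
    · exact h.d_ne_e _ _ hj.symm
    · exact h.d_ne_e _ _ hj.symm
    · have hi : j = 2 * i - j := h.injective_e (hj.trans hshift.symm)
      have hzero : ∀ i j : ZMod 5, j = 2 * i - j → i = j := by decide
      exact (hf j).1.ne (hzero i j hi ▸ hij)

namespace SpokedBelt

theorem adj_e_iff (h : SpokedBelt G γ c d e f) (hdeg : ∀ v, (G.neighborSet v).ncard = 3) :
    G.Adj (e i) x ↔ x = d i ∨ x = d (i + 1) ∨ x = f i :=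
  adj_iff_of_ncard_neighborSet_eq_three (hdeg _) (h.adj_d_e i).symm (h.adj_e_d i) (h.adj_e_f i)
    (h.injective_d.ne (by simp)) (h.d_ne_f _ _) (h.d_ne_f _ _)

theorem not_adj_d_f (h : SpokedBelt G γ c d e f) (hdeg : ∀ v, (G.neighborSet v).ncard = 3)
    (i j : ZMod 5) : ¬ G.Adj (d i) (f j) := by
  rw [h.adj_d_iff hdeg]
  rintro (hij | hij | hij)
  exacts [h.c_ne_f _ _ hij.symm, h.e_ne_f _ _ hij.symm, h.e_ne_f _ _ hij.symm]

theorem not_adj_c_of_adj_f (h : SpokedBelt G γ c d e f) (hdeg : ∀ v, (G.neighborSet v).ncard = 3)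
    (hx : G.Adj (f i) x) (j : ZMod 5) : ¬ G.Adj (c j) x := by
  have hcf (m : ZMod 5) : ¬ G.Adj (c m) (f i) := by
    rw [h.adj_c_iff hdeg]
    rintro (hm | hm | hm)
    exacts [h.c_ne_f _ _ hm.symm, h.c_ne_f _ _ hm.symm, h.d_ne_f _ _ hm.symm]
  intro hjx
  rcases (h.adj_c_iff hdeg).1 hjx with rfl | rfl | rfl
  exacts [hcf _ hx.symm, hcf _ hx.symm, h.not_adj_d_f hdeg _ _ hx.symm]

theorem exists_eq_e_of_adj_of_adj (h : SpokedBelt G γ c d e f)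
    (hdeg : ∀ v, (G.neighborSet v).ncard = 3) (hx : G.Adj (f i) x) (hxy : G.Adj x y)
    (hy : G.Adj (d j) y) : (y = e j ∧ x = f j) ∨ (y = e (j - 1) ∧ x = f (j - 1)) := by
  have hxd (m : ZMod 5) : x ≠ d m := by
    rintro rfl
    exact h.not_adj_d_f hdeg _ _ hx.symm
  rcases (h.adj_d_iff hdeg).1 hy with rfl | rfl | rfl
  · exact absurd hxy.symm (h.not_adj_c_of_adj_f hdeg hx j)
  · rcases (h.adj_e_iff hdeg).1 hxy.symm with hx | hx | hx
    exacts [absurd hx (hxd _), absurd hx (hxd _), .inl ⟨rfl, hx⟩]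
  · rcases (h.adj_e_iff hdeg).1 hxy.symm with hx | hx | hx
    exacts [absurd hx (hxd _), absurd hx (hxd _), .inr ⟨rfl, hx⟩]

-- A pentagon through `e i`-`f i` leaves `e i` along the belt, through some `d j`. It cannot go on
-- to `c j`, which has no common neighbor with `f i`, so it takes the next `e` and its `f`.
theorem exists_adj_f_add_one (h : SpokedBelt G γ c d e f)
    (hdeg : ∀ v, (G.neighborSet v).ncard = 3) (hk : IsPentagon G k) (hk0 : k 0 = e i)
    (hk1 : k 1 = f i) : ∃ j, G.Adj (f j) (f (j + 1)) := by
  have hf2 : G.Adj (f i) (k 2) := hk1 ▸ hk.2 1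
  have h43 : G.Adj (k 4) (k 3) := (hk.2 3).symm
  have h3e : k 3 ≠ e i := hk0 ▸ hk.1.ne (by decide)
  have he4 : G.Adj (e i) (k 4) := hk0 ▸ (hk.2 4).symm
  have h41 : k 4 ≠ f i := hk1 ▸ hk.1.ne (by decide)
  rcases (h.adj_e_iff hdeg).1 he4 with h4 | h4 | h4
  · rcases h.exists_eq_e_of_adj_of_adj hdeg hf2 (hk.2 2) (h4 ▸ h43) with ⟨h3, -⟩ | ⟨-, h2⟩
    · exact absurd h3 h3e
    · exact ⟨i - 1, by rw [sub_add_cancel, ← h2]; exact hf2.symm⟩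
  · rcases h.exists_eq_e_of_adj_of_adj hdeg hf2 (hk.2 2) (h4 ▸ h43) with ⟨-, h2⟩ | ⟨h3, -⟩
    · exact ⟨i, h2 ▸ hf2⟩
    · exact absurd (h3.trans (by rw [add_sub_cancel_right])) h3e
  · exact absurd h4 h41

theorem adj_f_add_one (h : SpokedBelt G γ c d e f) (hf : G.Adj (f i) (f (i + 1))) (j : ZMod 5) :
    G.Adj (f j) (f (j + 1)) := by
  refine forall_of_forall_add_one (P := fun j ↦ G.Adj (f j) (f (j + 1))) (fun j hj ↦ ?_) hf j
  rw [← h.rotated_f, ← h.rotated_f]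
  exact γ.map_adj_iff.2 hj

theorem nonempty_iso_dodecahedronGraph (h : SpokedBelt G γ c d e f) (hconn : G.Preconnected)
    (hdeg : ∀ v, (G.neighborSet v).ncard = 3) (hf : G.Adj (f i) (f (i + 1))) :
    Nonempty (G ≃g dodecahedronGraph) :=
  nonempty_iso_genPetersenGraph (n := 2 * 5) (k := 2) (a := interleave d e)
    (b := interleave c f) hconn hdeg (by decide) (by decide)
    (interleave_rel_add_one h.adj_d_e h.adj_e_d)
    (interleave_rel_interleave (fun i ↦ (h.adj_c_d i).symm) h.adj_e_f)
    (interleave_rel_add_two h.isPentagon.2 (h.adj_f_add_one hf))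
    (interleave_injective h.injective_d h.injective_e h.d_ne_e)
    (interleave_injective h.isPentagon.1 h.injective_f h.c_ne_f)
    (fun i ↦ forall_interleave (P := fun v ↦ interleave d e i ≠ v)
      (fun j ↦ forall_interleave (P := (· ≠ c j)) (fun l ↦ (h.c_ne_d j l).symm)
        (fun l ↦ (h.c_ne_e j l).symm) i)
      (fun j ↦ forall_interleave (P := (· ≠ f j)) (h.d_ne_f · j) (h.e_ne_f · j) i))

end SpokedBelt

end Layers

/-- A connected cubic graph (finite or infinite) of girth 5 with a consistent 5-cycle
in which every edge lies on a 5-cycle is the Petersen graph or the dodecahedron. -/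
theorem girth_five_consistent_cycle
    {V : Type*} (Γ : SimpleGraph V) (hconn : Γ.Connected)
    (hcubic : ∀ v : V, (Γ.neighborSet v).ncard = 3)
    (hgirth : Γ.egirth = 5)
    (hcons : HasConsistentCycle Γ 5)
    (hedge : ∀ u w : V, Γ.Adj u w → ∃ c : ZMod 5 → V, Function.Injective c ∧
      (∀ i, Γ.Adj (c i) (c (i + 1))) ∧ c 0 = u ∧ c 1 = w) :
    Nonempty (Γ ≃g petersenGraph) ∨ Nonempty (Γ ≃g dodecahedronGraph) := by
  have hgirth₃ : 3 < Γ.egirth := hgirth ▸ by decide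
  have hgirth₄ : 4 < Γ.egirth := hgirth ▸ by decide
  obtain ⟨c, hc_inj, hc_adj, γ, hγ⟩ := hcons
  obtain ⟨d, hcd⟩ := IsPentagon.exists_spokedPentagon ⟨hc_inj, hc_adj⟩ hgirth₃ hcubic hγ
  by_cases! hd : ∃ i, Γ.Adj (d i) (d (i + 2))
  · obtain ⟨i, hi⟩ := hd
    exact .inl (hcd.nonempty_iso_petersenGraph hconn.preconnected hcubic hi)
  · have hdd := hcd.not_adj_d hgirth₄ hd
    obtain ⟨k, hk_inj, hk_adj, hk0, hk1⟩ := hedge _ _ (hcd.adj_c_d 0)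
    obtain ⟨i, x, hx, hx'⟩ := hcd.exists_common_neighbor hcubic hdd ⟨hk_inj, hk_adj⟩ hk0 hk1
    obtain ⟨e, hcde⟩ := hcd.exists_beltedPentagon hgirth₄ hcubic hdd hx hx'
    obtain ⟨f, hcdef⟩ := hcde.exists_spokedBelt hcubic
    obtain ⟨l, hl_inj, hl_adj, hl0, hl1⟩ := hedge _ _ (hcdef.adj_e_f 0)
    obtain ⟨j, hj⟩ := hcdef.exists_adj_f_add_one hcubic ⟨hl_inj, hl_adj⟩ hl0 hl1
    exact .inr (hcdef.nonempty_iso_dodecahedronGraph hconn.preconnected hcubic hj)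
end

section
/- Every cubic simple graph of girth 6 whose automorphism group acts transitively on the set of its 3-arcs contains a consistent cycle of length 6. -/
open SimpleGraph

/-- `x 0, x 1, …, x s` is an `s`-arc of `G`: consecutive vertices are adjacent and
`x i ≠ x (i+2)` whenever both are defined. -/
def IsNArc {V : Type*} (G : SimpleGraph V) (s : ℕ) (x : ℕ → V) : Prop :=
  (∀ i < s, G.Adj (x i) (x (i + 1))) ∧ ∀ i, i + 2 ≤ s → x i ≠ x (i + 2)

/-- The automorphism group of `G` acts transitively on the `s`-arcs of `G`. -/
def IsNArcTransitive {V : Type*} (G : SimpleGraph V) (s : ℕ) : Prop :=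
  ∀ x y : ℕ → V, IsNArc G s x → IsNArc G s y → ∃ φ : G ≃g G, ∀ i ≤ s, φ (x i) = y i
/-!
An `s`-arc extends to at most two `(s + 1)`-arcs in a cubic graph. So 3-arc-transitivity leaves at
most two orbits of 4-arcs, and these orbits respect the property that the ends of the 4-arc have a
common neighbour, i.e. that the 4-arc lies on a hexagon. If some 4-arc lacks the property, then
all those which have it form a single orbit. If all 4-arcs have it (as in the Heawood graph), then
there is an automorphism fixing a 3-arc but moving an extension of it, so that the two extensions
of any 3-arc are equivalent and the graph is 4-arc-transitive. In both cases some automorphism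
shifts the 4-arc `c 0, …, c 4` of a given hexagon `c` to `c 1, …, c 5`; it maps `c 5` to a common
neighbour of `c 5` and `c 1`, which is `c 0` as there are no 4-cycles.
-/

/-- Two sequences are equivalent when some automorphism of `G` carries the first `s + 1` terms of
one to those of the other. On `s`-arcs, the classes are the orbits of the automorphism group. -/
def ArcEquiv {V : Type*} (G : SimpleGraph V) (s : ℕ) (x y : ℕ → V) : Prop :=
  ∃ φ : G ≃g G, ∀ i ≤ s, φ (x i) = y i

/-- The 4-arc `x` closes up to a closed walk of length 6, which is a 6-cycle when `G` has girth 6.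
The closing vertex is encoded as a common neighbour of the ends of `x`. -/
def IsClosable {V : Type*} (G : SimpleGraph V) (x : ℕ → V) : Prop :=
  (G.commonNeighbors (x 0) (x 4)).Nonempty

section

variable {V : Type*} {G : SimpleGraph V} {s : ℕ} {x y z : ℕ → V}

lemma cycleGraph_isContained_of_egirth_eq {n : ℕ} (h : G.egirth = n) : cycleGraph n ⊑ G := by
  have hn : 2 < n := by exact_mod_cast h ▸ G.three_le_egirth
  have hcyclic : ¬ G.IsAcyclic := by simp [← egirth_eq_top, h]
  obtain ⟨v, w, hw, hlen⟩ := exists_egirth_eq_length.2 hcyclic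
  exact (cycleGraph_isContained_iff hn).2 ⟨v, w, hw, by exact_mod_cast hlen.symm.trans h⟩

lemma commonNeighbor_unique (hgirth : 4 < G.egirth) {u w p q : V} (huw : u ≠ w)
    (hup : G.Adj u p) (hwp : G.Adj w p) (huq : G.Adj u q) (hwq : G.Adj w q) : p = q := by
  by_contra hpq
  let W : G.Walk p p := .cons hup.symm (.cons huq (.cons hwq.symm (.cons hwp .nil)))
  have hW : W.IsCycle := by
    simp only [W, Walk.isCycle_def, Walk.isTrail_def, Walk.edges_cons, Walk.edges_nil,
      Walk.support_cons, Walk.support_nil]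
    grind [hup.ne, huq.ne, hwp.ne, hwq.ne]
  exact (hgirth.trans_le hW.egirth_le_length).ne rfl

lemma exists_adj_ne_ne {v : V} (hv : (G.neighborSet v).ncard = 3) (p q : V) :
    ∃ r, G.Adj v r ∧ r ≠ p ∧ r ≠ q := by
  have hlt : ({p, q} : Set V).ncard < (G.neighborSet v).ncard := by
    grw [hv, Set.ncard_insert_le, Set.ncard_singleton]; norm_num
  simpa using Set.exists_mem_notMem_of_ncard_lt_ncard hlt

lemma eq_or_eq_or_eq_of_adj {v p a b c : V} (hv : (G.neighborSet v).ncard = 3) (hp : G.Adj v p)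
    (ha : G.Adj v a) (hb : G.Adj v b) (hc : G.Adj v c) (hpa : p ≠ a) (hpb : p ≠ b) (hpc : p ≠ c) :
    a = b ∨ a = c ∨ b = c := by
  by_contra! h
  have hfin : (G.neighborSet v).Finite := Set.finite_of_ncard_ne_zero (by simp [hv])
  have hlt : 3 < (G.neighborSet v).ncard := (Set.three_lt_ncard hfin).2
    ⟨p, hp, a, ha, b, hb, c, hc, hpa, hpb, hpc, h.1, h.2.1, h.2.2⟩
  exact hlt.ne' hv

lemma isNArc_one_iff : IsNArc G 1 x ↔ G.Adj (x 0) (x 1) := by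
  simp [IsNArc]

lemma isNArc_add_two_iff : IsNArc G (s + 2) x ↔
    IsNArc G (s + 1) x ∧ G.Adj (x (s + 1)) (x (s + 2)) ∧ x s ≠ x (s + 2) := by
  simp only [IsNArc, Nat.lt_succ_iff_lt_or_eq (n := s + 1), Nat.le_succ_iff (n := s + 1)]
  grind

lemma IsNArc.map (φ : G ≃g G) (hx : IsNArc G s x) : IsNArc G s (φ ∘ x) :=
  ⟨fun i hi ↦ φ.map_adj_iff.2 (hx.1 i hi), fun i hi ↦ φ.injective.ne (hx.2 i hi)⟩

lemma isNArc_of_cycle {n : ℕ} {c : ZMod n → V} (hn : (2 : ZMod n) ≠ 0) (hinj : Function.Injective c)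
    (hadj : ∀ i, G.Adj (c i) (c (i + 1))) (k : ZMod n) : IsNArc G s (fun i ↦ c (i + k)) := by
  refine ⟨fun i _ ↦ ?_, fun i _ ↦ hinj.ne ?_⟩
  · simpa [add_right_comm] using hadj (i + k)
  · simpa [add_right_comm] using hn

namespace ArcEquiv

lemma symm (h : ArcEquiv G s x y) : ArcEquiv G s y x := by
  obtain ⟨φ, hφ⟩ := h
  exact ⟨φ.symm, fun i hi ↦ by simp [← hφ i hi]⟩

lemma trans (hxy : ArcEquiv G s x y) (hyz : ArcEquiv G s y z) : ArcEquiv G s x z := by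
  obtain ⟨φ, hφ⟩ := hxy
  obtain ⟨ψ, hψ⟩ := hyz
  exact ⟨φ.trans ψ, fun i hi ↦ by simp [hφ i hi, hψ i hi]⟩

lemma comp_right (φ : G ≃g G) (x : ℕ → V) : ArcEquiv G s x (φ ∘ x) :=
  ⟨φ, fun _ _ ↦ rfl⟩

lemma of_eq (h : ∀ i ≤ s, x i = y i) : ArcEquiv G s x y :=
  ⟨.refl, h⟩

lemma isClosable (h : ArcEquiv G 4 x y) (hx : IsClosable G x) : IsClosable G y := by
  obtain ⟨φ, hφ⟩ := h
  obtain ⟨d, h0, h4⟩ := hx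
  exact ⟨φ d, hφ 0 (by simp) ▸ φ.map_adj_iff.2 h0, hφ 4 le_rfl ▸ φ.map_adj_iff.2 h4⟩

end ArcEquiv

lemma IsNArc.eq_or_eq_or_eq (hcubic : ∀ v : V, (G.neighborSet v).ncard = 3)
    (hx : IsNArc G (s + 2) x) (hy : IsNArc G (s + 2) y) (hz : IsNArc G (s + 2) z)
    (hxz : ∀ i ≤ s + 1, x i = z i) (hyz : ∀ i ≤ s + 1, y i = z i) :
    (∀ i ≤ s + 2, x i = y i) ∨ (∀ i ≤ s + 2, x i = z i) ∨ (∀ i ≤ s + 2, y i = z i) := by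
  obtain ⟨-, hx_adj, hx_ne⟩ := isNArc_add_two_iff.1 hx
  obtain ⟨-, hy_adj, hy_ne⟩ := isNArc_add_two_iff.1 hy
  obtain ⟨hz', hz_adj, hz_ne⟩ := isNArc_add_two_iff.1 hz
  rw [hxz _ (by simp)] at hx_adj hx_ne
  rw [hyz _ (by simp)] at hy_adj hy_ne
  have hback : G.Adj (z (s + 1)) (z s) := (hz'.1 s (by simp)).symm
  have := eq_or_eq_or_eq_of_adj (hcubic _) hback hx_adj hy_adj hz_adj hx_ne hy_ne hz_ne
  simp only [Nat.le_succ_iff (n := s + 1)]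
  grind

lemma arcEquiv_or_arcEquiv_or_arcEquiv (hcubic : ∀ v : V, (G.neighborSet v).ncard = 3)
    (htrans : IsNArcTransitive G (s + 1))
    (hx : IsNArc G (s + 2) x) (hy : IsNArc G (s + 2) y) (hz : IsNArc G (s + 2) z) :
    ArcEquiv G (s + 2) x y ∨ ArcEquiv G (s + 2) x z ∨ ArcEquiv G (s + 2) y z := by
  obtain ⟨φ, hφ⟩ := htrans x z (isNArc_add_two_iff.1 hx).1 (isNArc_add_two_iff.1 hz).1
  obtain ⟨ψ, hψ⟩ := htrans y z (isNArc_add_two_iff.1 hy).1 (isNArc_add_two_iff.1 hz).1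
  have hφx := ArcEquiv.comp_right (s := s + 2) φ x
  have hψy := ArcEquiv.comp_right (s := s + 2) ψ y
  rcases (hx.map φ).eq_or_eq_or_eq hcubic (hy.map ψ) hz hφ hψ with h | h | h
  · exact .inl ((hφx.trans (.of_eq h)).trans hψy.symm)
  · exact .inr (.inl (hφx.trans (.of_eq h)))
  · exact .inr (.inr (hψy.trans (.of_eq h)))

lemma isNArcTransitive_add_two_of_fixes_of_moves (hcubic : ∀ v : V, (G.neighborSet v).ncard = 3)
    (htrans : IsNArcTransitive G (s + 1)) (hx : IsNArc G (s + 2) x) (g : G ≃g G)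
    (hfix : ∀ i ≤ s + 1, g (x i) = x i) (hmove : g (x (s + 2)) ≠ x (s + 2)) :
    IsNArcTransitive G (s + 2) := by
  suffices hequiv : ∀ y, IsNArc G (s + 2) y → ArcEquiv G (s + 2) y x from
    fun y z hy hz ↦ (hequiv y hy).trans (hequiv z hz).symm
  intro y hy
  obtain ⟨θ, hθ⟩ := htrans y x (isNArc_add_two_iff.1 hy).1 (isNArc_add_two_iff.1 hx).1
  have hθy := ArcEquiv.comp_right (s := s + 2) θ y
  rcases (hy.map θ).eq_or_eq_or_eq hcubic (hx.map g) hx hθ hfix with h | h | h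
  · exact (hθy.trans (.of_eq h)).trans (ArcEquiv.comp_right g x).symm
  · exact hθy.trans (.of_eq h)
  · exact absurd (h (s + 2) le_rfl) hmove

lemma exists_fixes_neighbors_of_map_eq (hcubic : ∀ v : V, (G.neighborSet v).ncard = 3)
    (htrans : IsNArcTransitive G 3) {v a a₁ a₂ : V} (hva : G.Adj v a) (ha₁ : G.Adj a a₁)
    (ha₂ : G.Adj a a₂) (hva₁ : a₁ ≠ v) (hva₂ : a₂ ≠ v) :
    ∃ g : G ≃g G, g v = v ∧ (∀ w, G.Adj v w → g w = w) ∧ g a₁ = a₂ := by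
  obtain ⟨b, hvb, hba, -⟩ := exists_adj_ne_ne (hcubic v) a a
  have harc : ∀ a', G.Adj a a' → a' ≠ v → IsNArc G 3 ([a', a, v, b].getD · b) := by
    intro a' ha' hva'
    simp [isNArc_add_two_iff, isNArc_one_iff, ha'.symm, hva.symm, hvb, hva', hba.symm]
  obtain ⟨g, hg⟩ := htrans _ _ (harc a₁ ha₁ hva₁) (harc a₂ ha₂ hva₂)
  have hga : g a = a := hg 1 (by simp)
  have hgv : g v = v := hg 2 (by simp)
  have hgb : g b = b := hg 3 (by simp)
  refine ⟨g, hgv, fun w hw ↦ ?_, hg 0 (by simp)⟩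
  by_cases hwa : w = a
  · rw [hwa, hga]
  have hgw : G.Adj v (g w) := by simpa [hgv] using g.map_adj_iff.2 hw
  have hgwa : g w ≠ a := fun h ↦ hwa (g.injective (h.trans hga.symm))
  rcases eq_or_eq_or_eq_of_adj (hcubic v) hva hvb hw hgw hba.symm (Ne.symm hwa) hgwa.symm
    with h | h | h
  · rw [← h, hgb]
  · rw [← g.injective (hgb.trans h), hgb]
  · exact h.symm

lemma exists_commonNeighbor_at_dist_two (hgirth : 4 < G.egirth)
    (hclosable : ∀ x, IsNArc G 4 x → IsClosable G x) {v a a₁ a₂ d₁ d₂ : V} (hva : G.Adj v a)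
    (haa₁ : G.Adj a a₁) (haa₂ : G.Adj a a₂) (ha₁₂ : a₁ ≠ a₂) (hva₁ : v ≠ a₁)
    (had₁ : G.Adj a₁ d₁) (had₂ : G.Adj a₂ d₂) (hd₁ : a ≠ d₁) (hd₂ : a ≠ d₂) :
    ∃ e w, G.Adj d₁ e ∧ G.Adj d₂ e ∧ G.Adj e w ∧ G.Adj v w ∧ w ≠ a := by
  obtain ⟨e, hd₁e : G.Adj d₁ e, hd₂e : G.Adj d₂ e⟩ : (G.commonNeighbors d₁ d₂).Nonempty := by
    refine hclosable ([d₁, a₁, a, a₂, d₂].getD · a) ?_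
    simp [isNArc_add_two_iff, isNArc_one_iff, had₁.symm, haa₁.symm, haa₂, had₂, hd₁.symm, ha₁₂,
      hd₂]
  have hea₁ : e ≠ a₁ := by
    rintro rfl
    exact hd₂ (commonNeighbor_unique hgirth ha₁₂ haa₁.symm haa₂.symm hd₂e.symm had₂)
  obtain ⟨w, hew : G.Adj e w, hvw : G.Adj v w⟩ : (G.commonNeighbors e v).Nonempty := by
    refine hclosable ([e, d₁, a₁, a, v].getD · a) ?_
    simp [isNArc_add_two_iff, isNArc_one_iff, hd₁e.symm, had₁.symm, haa₁.symm, hva.symm, hea₁,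
      hd₁.symm, hva₁.symm]
  refine ⟨e, w, hd₁e, hd₂e, hew, hvw, ?_⟩
  rintro rfl
  exact hea₁ (commonNeighbor_unique hgirth hd₁ hew.symm hd₁e haa₁ had₁.symm)

/- If `e` is a common neighbour of `d` and `g d` which is joined to `v` by a path through `w`, then
`g` fixes `e`: otherwise `e`, `w`, `g e`, `g d` would be a 4-cycle. -/
lemma exists_isNArc_four_fixes_moves (hgirth : 4 < G.egirth)
    (hclosable : ∀ x, IsNArc G 4 x → IsClosable G x) {v a a₁ d : V} (hva : G.Adj v a)
    (haa₁ : G.Adj a a₁) (hva₁ : v ≠ a₁) (ha₁d : G.Adj a₁ d) (had : a ≠ d)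
    {g : G ≃g G} (hgv : g v = v) (hg : ∀ w, G.Adj v w → g w = w) (hga₁ : g a₁ ≠ a₁) :
    ∃ x, IsNArc G 4 x ∧ (∀ i ≤ 3, g (x i) = x i) ∧ g (x 4) ≠ x 4 := by
  have hga : g a = a := hg a hva
  have haga₁ : G.Adj a (g a₁) := by simpa [hga] using g.map_adj_iff.2 haa₁
  have hagd : a ≠ g d := fun h ↦ had (g.injective (hga.trans h))
  have hvd : ¬ G.Adj v d := fun h ↦
    had (commonNeighbor_unique hgirth hva₁ hva haa₁.symm h ha₁d)
  obtain ⟨e, w, hde, hgde, hew, hvw, hwa⟩ := exists_commonNeighbor_at_dist_two hgirth hclosable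
    hva haa₁ haga₁ hga₁.symm hva₁ ha₁d (g.map_adj_iff.2 ha₁d) had hagd
  have hev : e ≠ v := by
    rintro rfl
    exact hvd hde.symm
  have hge : g e = e := by
    by_contra hne
    have hgew : G.Adj (g e) w := by simpa [hg w hvw] using g.map_adj_iff.2 hew
    have hgegd : G.Adj (g e) (g d) := g.map_adj_iff.2 hde.symm
    have hwgd : w = g d := commonNeighbor_unique hgirth hne hgew hew hgegd hgde.symm
    exact hvd (g.injective ((hg w hvw).trans hwgd) ▸ hvw)
  refine ⟨([e, w, v, a, a₁].getD · a), ?_, ?_, hga₁⟩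
  · simp [isNArc_add_two_iff, isNArc_one_iff, hew, hvw.symm, hva, haa₁, hev, hwa, hva₁]
  · intro i hi
    interval_cases i
    exacts [hge, hg w hvw, hgv, hga]

lemma isNArcTransitive_four_of_forall_isClosable (hcubic : ∀ v : V, (G.neighborSet v).ncard = 3)
    (hgirth : 4 < G.egirth) (htrans : IsNArcTransitive G 3)
    (hclosable : ∀ x, IsNArc G 4 x → IsClosable G x) : IsNArcTransitive G 4 := by
  intro x y hx hy
  obtain ⟨a, hva, -, -⟩ := exists_adj_ne_ne (hcubic (x 0)) (x 0) (x 0)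
  obtain ⟨a₁, haa₁, hva₁, -⟩ := exists_adj_ne_ne (hcubic a) (x 0) (x 0)
  obtain ⟨a₂, haa₂, hva₂, ha₁₂⟩ := exists_adj_ne_ne (hcubic a) (x 0) a₁
  obtain ⟨d, ha₁d, had, -⟩ := exists_adj_ne_ne (hcubic a₁) a a
  obtain ⟨g, hgv, hg, hga₁⟩ :=
    exists_fixes_neighbors_of_map_eq hcubic htrans hva haa₁ haa₂ hva₁ hva₂
  obtain ⟨z, hz, hfix, hmove⟩ := exists_isNArc_four_fixes_moves hgirth hclosable hva haa₁
    hva₁.symm ha₁d had.symm hgv hg (hga₁ ▸ ha₁₂)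
  exact isNArcTransitive_add_two_of_fixes_of_moves hcubic htrans hz g hfix hmove x y hx hy

lemma IsClosable.arcEquiv (hcubic : ∀ v : V, (G.neighborSet v).ncard = 3)
    (hgirth : 4 < G.egirth) (htrans : IsNArcTransitive G 3) (hx : IsNArc G 4 x)
    (hy : IsNArc G 4 y) (hx' : IsClosable G x) (hy' : IsClosable G y) : ArcEquiv G 4 x y := by
  by_cases hclosable : ∀ z, IsNArc G 4 z → IsClosable G z
  · exact isNArcTransitive_four_of_forall_isClosable hcubic hgirth htrans hclosable x y hx hy
  push Not at hclosable
  obtain ⟨z, hz, hz'⟩ := hclosable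
  rcases arcEquiv_or_arcEquiv_or_arcEquiv hcubic htrans hx hy hz with h | h | h
  · exact h
  · exact absurd (h.isClosable hx') hz'
  · exact absurd (h.isClosable hy') hz'

theorem threeArcTransitive_girth_six_hasConsistentCycle_general
    (hcubic : ∀ v : V, (G.neighborSet v).ncard = 3) (hgirth : 4 < G.egirth)
    (htrans : IsNArcTransitive G 3) {c : ZMod 6 → V} (hinj : Function.Injective c)
    (hadj : ∀ i, G.Adj (c i) (c (i + 1))) : ∃ γ : G ≃g G, ∀ i, γ (c i) = c (i + 1) := by
  have harc (k : ZMod 6) : IsNArc G 4 (fun i ↦ c (i + k)) :=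
    isNArc_of_cycle (by decide) hinj hadj k
  have hclosable (k : ZMod 6) : IsClosable G (fun i ↦ c (i + k)) := by
    have h50 : 5 + k + 1 = 0 + k := by revert k; decide
    have h45 : 4 + k + 1 = 5 + k := by revert k; decide
    have h0 : G.Adj (c (0 + k)) (c (5 + k)) := h50 ▸ (hadj (5 + k)).symm
    have h4 : G.Adj (c (4 + k)) (c (5 + k)) := h45 ▸ hadj (4 + k)
    exact ⟨c (5 + k), by exact_mod_cast h0, h4⟩
  obtain ⟨γ, hγ⟩ := (hclosable 0).arcEquiv hcubic hgirth htrans (harc 0) (harc 1) (hclosable 1)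
  have hγ5 : γ (c 5) = c 0 := by
    have h4 : γ (c 4) = c 5 := hγ 4 le_rfl
    have h0 : γ (c 0) = c 1 := hγ 0 (by simp)
    have h45 : G.Adj (γ (c 4)) (γ (c 5)) := γ.map_adj_iff.2 (hadj 4)
    have h05 : G.Adj (γ (c 0)) (γ (c 5)) := γ.map_adj_iff.2 (hadj 5).symm
    have h51 : c 5 ≠ c 1 := hinj.ne (by decide)
    exact commonNeighbor_unique hgirth h51 (h4 ▸ h45) (h0 ▸ h05) (hadj 5) (hadj 0).symm
  refine ⟨γ, fun i ↦ ?_⟩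
  fin_cases i
  exacts [hγ 0 (by simp), hγ 1 (by simp), hγ 2 (by simp), hγ 3 (by simp), hγ 4 le_rfl, hγ5]

end

/-- Every cubic 3-arc-transitive graph of girth 6 has a consistent 6-cycle. -/
theorem threeArcTransitive_girth_six_hasConsistentCycle
    {V : Type*} (Γ : SimpleGraph V)
    (hcubic : ∀ v : V, (Γ.neighborSet v).ncard = 3)
    (hgirth : Γ.egirth = 6)
    (htrans : IsNArcTransitive Γ 3) :
    HasConsistentCycle Γ 6 := by
  obtain ⟨f⟩ : cycleGraph 6 ⊑ Γ := cycleGraph_isContained_of_egirth_eq hgirth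
  have hadj : ∀ i : Fin 6, Γ.Adj (f i) (f (i + 1)) := fun i ↦
    f.toHom.map_adj (by simp [cycleGraph_adj])
  exact ⟨f, f.injective, hadj, threeArcTransitive_girth_six_hasConsistentCycle_general hcubic
    (by rw [hgirth]; decide) htrans f.injective hadj⟩
end
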